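/- Let γ > 0. Define Φ* : ℝ → ℝ by Φ*(f) = sup_{t∈ℝ} ( f·t − πγ·Φ(t/(2π)) ) (the Legendre transform of t ↦ πγ·Φ(t/(2π))). Then this supremum is finite for every f ∈ ℝ, and: Φ*(f) = 0 whenever |f| ≤ γ/2, and Φ*(f) = 2πk|f| − πγk² whenever kγ − γ/2 ≤ |f| ≤ kγ + γ/2 for a positive integer k. -/

import Mathlib

/-- The function `Φ(D) = (2k+1)|D| − k − k²` where `k = ⌊|D|⌋ ∈ ℕ`. -/
noncomputable def Phi (D : ℝ) : ℝ :=
  (2 * (⌊|D|⌋₊ : ℝ) + 1) * |D| - (⌊|D|⌋₊ : ℝ) - (⌊|D|⌋₊ : ℝ) ^ 2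

/-!
`Phi` interpolates `D ↦ D ^ 2` linearly between the integers, so its slope jumps from `2k - 1` to
`2k + 1` at `D = k`. For `2k - 1 ≤ |p| ≤ 2k + 1` the function `D ↦ p * D - Phi D` is therefore
maximal at `|D| = k`, with `D` of the sign of `p`, and the maximum is `|p| * k - k ^ 2`. The
rescaling `t = 2πD`, `p = 2f / γ` turns this into the transform of `t ↦ πγ Phi (t / (2π))`.
-/

open Set

lemma isGreatest_range_mul_sub_of_even {R : Type*} [Ring R] [LinearOrder R] [IsOrderedRing R]
    {g : R → R} (hg : g.Even) {p x : R}
    (hmax : IsMaxOn (fun y ↦ |p| * y - g y) (Ici 0) x) :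
    IsGreatest (range fun t ↦ p * t - g t) (|p| * x - g x) := by
  constructor
  · rcases abs_choice p with hp | hp
    · exact ⟨x, by rw [hp]⟩
    · exact ⟨-x, by simp only [hp, hg x, mul_neg, neg_mul]⟩
  · rintro _ ⟨t, rfl⟩
    have g_abs : g |t| = g t := by
      rcases abs_choice t with ht | ht <;> rw [ht]
      exact hg t
    calc p * t - g t ≤ |p| * |t| - g |t| := by
          rw [g_abs, ← abs_mul]
          exact sub_le_sub_right (le_abs_self _) _
      _ ≤ |p| * x - g x := hmax (abs_nonneg t)

lemma range_mul_sub_mul_comp_div {K : Type*} [Field K] (g : K → K) {a c : K} (ha : a ≠ 0)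
    (hc : c ≠ 0) (p : K) :
    (range fun t ↦ p * t - c * g (t / a)) = (c * ·) '' range fun x ↦ a * p / c * x - g x := by
  rw [← (mul_left_surjective₀ ha).range_comp, ← range_comp]
  congr 1
  ext x
  simp only [Function.comp_apply]
  field_simp

lemma exists_nat_mul_sub_half_le {K : Type*} [Field K] [LinearOrder K] [IsStrictOrderedRing K]
    [FloorSemiring K] {c x : K} (hc : 0 < c) (hx : 0 ≤ x) :
    ∃ k : ℕ, k * c - c / 2 ≤ x ∧ x ≤ k * c + c / 2 := by
  have lower := Nat.floor_le (show 0 ≤ (x + c / 2) / c by positivity)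
  have upper := (Nat.lt_floor_add_one ((x + c / 2) / c)).le
  rw [le_div_iff₀ hc] at lower
  rw [div_le_iff₀ hc] at upper
  exact ⟨⌊(x + c / 2) / c⌋₊, by linarith, by linarith⟩

lemma Phi_even : Function.Even Phi := fun D ↦ by
  simp only [Phi, abs_neg]

lemma Phi_natCast (k : ℕ) : Phi k = (k : ℝ) ^ 2 := by
  simp only [Phi, Nat.abs_cast, Nat.floor_natCast]
  ring

lemma chord_le_Phi (D : ℝ) (j : ℤ) : (2 * j + 1) * |D| - j - (j : ℝ) ^ 2 ≤ Phi D := by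
  have floor_le : (⌊|D|⌋₊ : ℝ) ≤ |D| := Nat.floor_le (abs_nonneg D)
  have le_floor_add_one : |D| ≤ (⌊|D|⌋₊ : ℝ) + 1 := (Nat.lt_floor_add_one _).le
  unfold Phi
  generalize ⌊|D|⌋₊ = m at *
  have left_nonneg : (0 : ℝ) ≤ (m - j) ^ 2 - (m - j) := by
    exact_mod_cast sub_nonneg.2 (Int.le_self_sq (m - j))
  have right_nonneg : (0 : ℝ) ≤ (m - j) ^ 2 + (m - j) := by
    have := Int.le_self_sq (-(m - j))
    exact_mod_cast (by linarith : (0 : ℤ) ≤ (m - j) ^ 2 + (m - j))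
  -- At an integer `n` the chord lies `(n - j) ^ 2 - (n - j)` below `n ^ 2`; the gap at `|D|`
  -- interpolates these values between `n = m` and `n = m + 1`.
  have gap_eq : (2 * m + 1) * |D| - m - (m : ℝ) ^ 2 - ((2 * j + 1) * |D| - j - (j : ℝ) ^ 2) =
      (m + 1 - |D|) * ((m - j) ^ 2 - (m - j)) + (|D| - m) * ((m - j) ^ 2 + (m - j)) := by
    ring
  rw [← sub_nonneg, gap_eq]
  exact add_nonneg (mul_nonneg (sub_nonneg.2 le_floor_add_one) left_nonneg)
    (mul_nonneg (sub_nonneg.2 floor_le) right_nonneg)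

lemma isMaxOn_mul_sub_Phi {p : ℝ} {k : ℕ} (h₁ : 2 * k - 1 ≤ p) (h₂ : p ≤ 2 * k + 1) :
    IsMaxOn (fun x ↦ p * x - Phi x) (Ici 0) k := by
  intro x (hx : 0 ≤ x)
  suffices slope_le : p * (x - k) ≤ Phi x - (k : ℝ) ^ 2 by
    change p * x - Phi x ≤ p * k - Phi k
    rw [Phi_natCast]
    linarith
  rcases le_total (k : ℝ) x with hkx | hxk
  · have chord := chord_le_Phi x k
    rw [abs_of_nonneg hx] at chord
    push_cast at chord
    calc p * (x - k) ≤ (2 * k + 1) * (x - k) := by gcongr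
      _ ≤ Phi x - (k : ℝ) ^ 2 := by linarith
  · have chord := chord_le_Phi x (k - 1)
    rw [abs_of_nonneg hx] at chord
    push_cast at chord
    calc p * (x - k) ≤ (2 * k - 1) * (x - k) :=
          mul_le_mul_of_nonpos_right h₁ (sub_nonpos.2 hxk)
      _ ≤ Phi x - (k : ℝ) ^ 2 := by linarith

lemma isGreatest_range_mul_sub_Phi {p : ℝ} {k : ℕ} (h₁ : 2 * k - 1 ≤ |p|)
    (h₂ : |p| ≤ 2 * k + 1) :
    IsGreatest (range fun D ↦ p * D - Phi D) (|p| * k - (k : ℝ) ^ 2) := by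
  rw [← Phi_natCast]
  exact isGreatest_range_mul_sub_of_even Phi_even (isMaxOn_mul_sub_Phi h₁ h₂)

lemma isGreatest_range_mul_sub_mul_Phi_div {a c f : ℝ} {k : ℕ} (ha : a ≠ 0) (hc : 0 < c)
    (h₁ : (2 * k - 1) * c ≤ |a * f|) (h₂ : |a * f| ≤ (2 * k + 1) * c) :
    IsGreatest (range fun t ↦ f * t - c * Phi (t / a)) (|a * f| * k - c * (k : ℝ) ^ 2) := by
  have abs_slope : |a * f / c| = |a * f| / c := by rw [abs_div, abs_of_pos hc]
  have unscaled : IsGreatest (range fun D ↦ a * f / c * D - Phi D)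
      (|a * f| / c * k - (k : ℝ) ^ 2) := by
    rw [← abs_slope]
    apply isGreatest_range_mul_sub_Phi <;> rw [abs_slope]
    · exact (le_div_iff₀ hc).2 h₁
    · exact (div_le_iff₀ hc).2 h₂
  have value_eq : |a * f| * k - c * (k : ℝ) ^ 2 = c * (|a * f| / c * k - (k : ℝ) ^ 2) := by
    field_simp
  rw [range_mul_sub_mul_comp_div Phi ha hc.ne', value_eq]
  exact (monotone_mul_left_of_nonneg hc.le).map_isGreatest unscaled

lemma isGreatest_range_mul_sub_pi_mul_Phi {γ f : ℝ} {k : ℕ} (hγ : 0 < γ)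
    (h₁ : k * γ - γ / 2 ≤ |f|) (h₂ : |f| ≤ k * γ + γ / 2) :
    IsGreatest (range fun t ↦ f * t - Real.pi * γ * Phi (t / (2 * Real.pi)))
      (2 * Real.pi * k * |f| - Real.pi * γ * (k : ℝ) ^ 2) := by
  have abs_two_pi_mul : |2 * Real.pi * f| = Real.pi * (2 * |f|) := by
    rw [abs_mul, abs_of_pos Real.two_pi_pos]
    ring
  have lower : (2 * k - 1) * (Real.pi * γ) ≤ |2 * Real.pi * f| :=
    calc (2 * k - 1) * (Real.pi * γ) = Real.pi * (2 * (k * γ - γ / 2)) := by ring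
      _ ≤ Real.pi * (2 * |f|) := by gcongr
      _ = |2 * Real.pi * f| := abs_two_pi_mul.symm
  have upper : |2 * Real.pi * f| ≤ (2 * k + 1) * (Real.pi * γ) :=
    calc |2 * Real.pi * f| = Real.pi * (2 * |f|) := abs_two_pi_mul
      _ ≤ Real.pi * (2 * (k * γ + γ / 2)) := by gcongr
      _ = (2 * k + 1) * (Real.pi * γ) := by ring
  have value_eq : 2 * Real.pi * k * |f| - Real.pi * γ * (k : ℝ) ^ 2 =
      |2 * Real.pi * f| * k - Real.pi * γ * (k : ℝ) ^ 2 := by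
    rw [abs_two_pi_mul]
    ring
  rw [value_eq]
  exact isGreatest_range_mul_sub_mul_Phi_div Real.two_pi_pos.ne' (mul_pos Real.pi_pos hγ)
    lower upper

/-- Let `γ > 0` and let `Φ*(f)` be the Legendre transform of
`t ↦ πγ Φ(t/(2π))`. Then the defining supremum is finite for every `f`, and
`Φ*(f) = 0` for `|f| ≤ γ/2`, while `Φ*(f) = 2πk|f| − πγk²` whenever
`kγ − γ/2 ≤ |f| ≤ kγ + γ/2` with `k ≥ 1` an integer. -/
theorem legendre_transform_of_Phi (γ : ℝ) (hγ : 0 < γ) :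
    (∀ f : ℝ, BddAbove
      (Set.range fun t : ℝ => f * t - Real.pi * γ * Phi (t / (2 * Real.pi)))) ∧
    (∀ f : ℝ, |f| ≤ γ / 2 →
      sSup (Set.range fun t : ℝ => f * t - Real.pi * γ * Phi (t / (2 * Real.pi))) = 0) ∧
    (∀ f : ℝ, ∀ k : ℕ, 1 ≤ k →
      (k : ℝ) * γ - γ / 2 ≤ |f| → |f| ≤ (k : ℝ) * γ + γ / 2 →
      sSup (Set.range fun t : ℝ => f * t - Real.pi * γ * Phi (t / (2 * Real.pi))) =
        2 * Real.pi * (k : ℝ) * |f| - Real.pi * γ * (k : ℝ) ^ 2) := by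
  refine ⟨fun f ↦ ?_, fun f hf ↦ ?_, fun f k _ h₁ h₂ ↦ ?_⟩
  · obtain ⟨k, h₁, h₂⟩ := exists_nat_mul_sub_half_le hγ (abs_nonneg f)
    exact (isGreatest_range_mul_sub_pi_mul_Phi hγ h₁ h₂).bddAbove
  · have lower : (0 : ℕ) * γ - γ / 2 ≤ |f| := by
      rw [Nat.cast_zero]
      linarith [abs_nonneg f]
    have upper : |f| ≤ (0 : ℕ) * γ + γ / 2 := by simpa using hf
    simpa using (isGreatest_range_mul_sub_pi_mul_Phi hγ lower upper).csSup_eq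
  · exact (isGreatest_range_mul_sub_pi_mul_Phi hγ h₁ h₂).csSup_eq
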